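/- Let n ≥ 4, let L be a line in P^2, let p_2,…,p_n be distinct points of L, and let p_1 be a point not on L. Let Z = 2p_1 + p_2 + ⋯ + p_n be the fat points scheme with a double point at p_1 and simple points at p_2,…,p_n. Then the Waldschmidt constant satisfies α̂(I(Z)) ≥ (3n−5)/(n−1) = 3 − 2/(n−1). -/

import Mathlib

noncomputable section

open MvPolynomial

/-- `alpha J` is the least degree of a nonzero homogeneous form in the ideal `J`. -/
def alpha {kk : Type*} [Field kk] {σ : Type*} (J : Ideal (MvPolynomial σ kk)) : ℕ :=
  sInf {d : ℕ | ∃ f ∈ J, f ≠ 0 ∧ MvPolynomial.IsHomogeneous f d}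

/-- The homogeneous (prime) ideal of the point of `ℙ²` represented by the nonzero vector
`p`, generated by the linear forms vanishing at `p`. -/
def pointIdeal {kk : Type*} [Field kk] (p : Fin 3 → kk) : Ideal (MvPolynomial (Fin 3) kk) :=
  Ideal.span {f | f.IsHomogeneous 1 ∧ MvPolynomial.eval p f = 0}

/-- Two nonzero vectors represent the same point of `ℙ²`. -/
def projEq {kk : Type*} [Field kk] (p q : Fin 3 → kk) : Prop :=
  ∃ c : kk, c ≠ 0 ∧ q = c • p

/-!
Choose coordinates in which `L = {x₀ = 0}` and the point off `L` is `(1 : 0 : 0)`, and write a form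
`f` of degree `d` as `∑ x₀ʲ Fⱼ(x₁, x₂)`. If `f` vanishes to order `a` at `(1 : 0 : 0)` and to order
`mᵢ` at the `i`-th of `s` distinct points of `L`, a nonzero `Fⱼ` is a form of degree `d - j ≥ a`
divisible by the `mᵢ - j`-th power of the equation of the `i`-th point on `L`. Hence `a + j ≤ d` and
`∑ (mᵢ - j) + j ≤ d`; adding `s - 1` times the first inequality to the second eliminates `j` and
gives `s a + ∑ mᵢ ≤ s d + a`. The Waldschmidt bound is this inequality for the multiples of `Z`.
-/

section LinearForms

theorem exists_eq_sum_smul_X_of_isHomogeneous_one {R σ : Type*} [CommSemiring R] [Fintype σ]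
    {f : MvPolynomial σ R} (hf : f.IsHomogeneous 1) : ∃ c : σ → R, f = ∑ i, c i • X i := by
  have hspan : f ∈ Submodule.span R (Set.range X) :=
    homogeneousSubmodule_one_eq_span_X (R := R) (σ := σ) ▸ hf
  obtain ⟨c, hc⟩ := Submodule.mem_span_range_iff_exists_fun R |>.1 hspan
  exact ⟨c, hc.symm⟩

theorem exists_dual_eq_eval_of_isHomogeneous_one {R σ : Type*} [CommSemiring R] [Finite σ]
    {f : MvPolynomial σ R} (hf : f.IsHomogeneous 1) :
    ∃ φ : Module.Dual R (σ → R), ∀ x, φ x = eval x f := by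
  have := Fintype.ofFinite σ
  obtain ⟨c, rfl⟩ := exists_eq_sum_smul_X_of_isHomogeneous_one hf
  exact ⟨Fintype.linearCombination R c,
    fun x ↦ by simp [Fintype.linearCombination_apply, mul_comm]⟩

theorem irreducible_of_isHomogeneous_one {K σ : Type*} [Field K] {f : MvPolynomial σ K}
    (hf : f.IsHomogeneous 1) (hf0 : f ≠ 0) : Irreducible f := by
  refine irreducible_of_totalDegree_eq_one (hf.totalDegree hf0) fun x hx ↦ ?_
  obtain ⟨i, hi⟩ := ne_zero_iff.1 hf0
  exact (ne_zero_of_dvd_ne_zero hi (hx i)).isUnit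

end LinearForms

section BinaryForms

variable {R K : Type*} [CommRing R] [Field K]

/-- The equation `v₁ x₀ - v₀ x₁` of the point `(v₀ : v₁)` of the projective line. Its powers
measure the order of vanishing of a binary form at that point. -/
def pointForm (v : Fin 2 → R) : MvPolynomial (Fin 2) R :=
  C (v 1) * X 0 - C (v 0) * X 1

theorem pointForm_isHomogeneous (v : Fin 2 → R) : (pointForm v).IsHomogeneous 1 :=
  (isHomogeneous_C_mul_X _ _).sub (isHomogeneous_C_mul_X _ _)

theorem eval_pointForm (v w : Fin 2 → R) : eval w (pointForm v) = v 1 * w 0 - v 0 * w 1 := by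
  simp [pointForm]

theorem exists_smul_eq_of_eval_pointForm_eq_zero {v w : Fin 2 → K} (hv : v ≠ 0)
    (h : eval w (pointForm v) = 0) : ∃ c : K, c • v = w := by
  rw [eval_pointForm, sub_eq_zero] at h
  obtain ⟨i, hi⟩ := Function.ne_iff.1 hv
  rw [Pi.zero_apply] at hi
  refine ⟨w i / v i, funext fun j ↦ ?_⟩
  rw [Pi.smul_apply, smul_eq_mul, div_mul_eq_mul_div, div_eq_iff hi]
  fin_cases i <;> fin_cases j <;> grind

theorem pointForm_ne_zero {v : Fin 2 → R} (hv : v ≠ 0) : pointForm v ≠ 0 := by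
  intro h
  have hv_eval (w : Fin 2 → R) : v 1 * w 0 - v 0 * w 1 = 0 := by rw [← eval_pointForm, h, map_zero]
  refine hv (funext fun i ↦ ?_)
  fin_cases i
  · simpa using hv_eval ![0, 1]
  · simpa using hv_eval ![1, 0]

theorem pointForm_dvd_of_eval_eq_zero {v : Fin 2 → K} (hv : v ≠ 0) {f : MvPolynomial (Fin 2) K}
    (hf : f.IsHomogeneous 1) (hfv : eval v f = 0) : pointForm v ∣ f := by
  obtain ⟨c, rfl⟩ := exists_eq_sum_smul_X_of_isHomogeneous_one hf
  have hcv : c 0 * v 0 + c 1 * v 1 = 0 := by simpa using hfv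
  have hCcv : C (c 0) * C (v 0) + C (c 1) * C (v 1) = (0 : MvPolynomial (Fin 2) K) := by
    rw [← C_mul, ← C_mul, ← C_add, hcv, C_0]
  rw [Fin.sum_univ_two, smul_eq_C_mul, smul_eq_C_mul, pointForm]
  obtain h0 | h1 := Fin.exists_fin_two.1 (Function.ne_iff.1 hv)
  · rw [← (h0.isUnit.map C).dvd_mul_left]
    exact ⟨-C (c 1), by linear_combination X 0 * hCcv⟩
  · rw [← (h1.isUnit.map C).dvd_mul_left]
    exact ⟨C (c 0), by linear_combination X 1 * hCcv⟩

theorem isRelPrime_pointForm {v w : Fin 2 → K} (hv : v ≠ 0) (hw : w ≠ 0)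
    (hvw : ∀ c : K, c • w ≠ v) : IsRelPrime (pointForm v) (pointForm w) := by
  have hirr := irreducible_of_isHomogeneous_one (pointForm_isHomogeneous v) (pointForm_ne_zero hv)
  rw [hirr.isRelPrime_iff_not_dvd]
  rintro ⟨g, hg⟩
  have hself : eval v (pointForm v) = 0 := by rw [eval_pointForm]; ring
  have hzero : eval v (pointForm w) = 0 := by rw [hg, map_mul, hself, zero_mul]
  obtain ⟨c, hc⟩ := exists_smul_eq_of_eval_pointForm_eq_zero hw hzero
  exact hvw c hc

theorem sum_le_totalDegree_of_pointForm_pow_dvd {ι : Type*} {s : Finset ι} {v : ι → Fin 2 → K}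
    (hv : ∀ i ∈ s, v i ≠ 0) (hvv : ∀ i ∈ s, ∀ j ∈ s, i ≠ j → ∀ c : K, c • v i ≠ v j)
    {e : ι → ℕ} {f : MvPolynomial (Fin 2) K} (hf0 : f ≠ 0)
    (hf : ∀ i ∈ s, pointForm (v i) ^ e i ∣ f) : ∑ i ∈ s, e i ≤ f.totalDegree := by
  have hdvd : ∏ i ∈ s, pointForm (v i) ^ e i ∣ f :=
    Finset.prod_dvd_of_isRelPrime
      (fun i hi j hj hij ↦ (isRelPrime_pointForm (hv i hi) (hv j hj) (hvv j hj i hi hij.symm)).pow)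
      hf
  have hhom : (∏ i ∈ s, pointForm (v i) ^ e i).IsHomogeneous (∑ i ∈ s, 1 * e i) :=
    IsHomogeneous.prod _ _ _ fun i _ ↦ (pointForm_isHomogeneous (v i)).pow (e i)
  calc ∑ i ∈ s, e i = (∏ i ∈ s, pointForm (v i) ^ e i).totalDegree := by
        simp [hhom.totalDegree (ne_zero_of_dvd_ne_zero hf0 hdvd)]
    _ ≤ f.totalDegree := totalDegree_le_of_dvd_of_isDomain hdvd hf0

end BinaryForms

section Expansion

theorem coeff_mem_pow_of_mem_comap_constantCoeff_pow {R : Type*} [CommRing R] {I : Ideal R} {m : ℕ}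
    {F : Polynomial R} (hF : F ∈ I.comap Polynomial.constantCoeff ^ m) (j : ℕ) :
    F.coeff j ∈ I ^ (m - j) := by
  induction m generalizing F j with
  | zero => simp
  | succ m ih =>
    rw [pow_succ] at hF
    refine Submodule.mul_induction_on hF (fun G hG H hH ↦ ?_) fun G H hG hH ↦ ?_
    · rw [Polynomial.coeff_mul]
      refine Submodule.sum_mem _ fun ⟨a, b⟩ hab ↦ ?_
      rw [Finset.HasAntidiagonal.mem_antidiagonal] at hab
      rcases b with _ | b
      · refine Ideal.pow_le_pow_right (show m + 1 - j ≤ m - a + 1 by omega) ?_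
        exact pow_succ I (m - a) ▸ Ideal.mul_mem_mul (ih hG a) hH
      · exact Ideal.mul_mem_right _ _ <|
          Ideal.pow_le_pow_right (show m + 1 - j ≤ m - a by omega) (ih hG a)
    · exact Polynomial.coeff_add G H j ▸ add_mem hG hH

theorem le_totalDegree_of_mem_pow_idealOfVars {R σ : Type*} [CommSemiring R] {N : ℕ}
    {f : MvPolynomial σ R} (hf : f ∈ idealOfVars σ R ^ N) (hf0 : f ≠ 0) : N ≤ f.totalDegree := by
  obtain ⟨x, hx⟩ := support_nonempty.2 hf0
  exact ((mem_pow_idealOfVars_iff N f).1 hf x hx).trans (le_totalDegree hx)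

theorem eval_coeff_zero_finSuccEquiv {R : Type*} [CommSemiring R] {n : ℕ} (v : Fin n → R)
    (f : MvPolynomial (Fin (n + 1)) R) :
    eval v ((finSuccEquiv R n f).coeff 0) = eval (Fin.cons 0 v) f := by
  rw [eval_eq_eval_mv_eval', ← Polynomial.coeff_zero_eq_eval_zero, Polynomial.coeff_map]

theorem map_mem_pow_of_mem_pointIdeal_pow {K A E : Type*} [Field K] [CommRing A]
    [FunLike E (MvPolynomial (Fin 3) K) A] [RingHomClass E (MvPolynomial (Fin 3) K) A]
    (φ : E) {J : Ideal A} {q : Fin 3 → K}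
    (hφ : ∀ g : MvPolynomial (Fin 3) K, g.IsHomogeneous 1 → eval q g = 0 → φ g ∈ J)
    {N : ℕ} {f : MvPolynomial (Fin 3) K} (hf : f ∈ pointIdeal q ^ N) : φ f ∈ J ^ N := by
  have hmap : (pointIdeal q).map φ ≤ J :=
    Ideal.map_le_iff_le_comap.2 <| Ideal.span_le.2 fun g ⟨hg, hgq⟩ ↦ hφ g hg hgq
  have hmem := Ideal.mem_map_of_mem φ hf
  rw [Ideal.map_pow] at hmem
  exact Ideal.pow_right_mono hmap N hmem

theorem pointForm_pow_dvd_coeff_finSuccEquiv {K : Type*} [Field K] {v : Fin 2 → K} (hv : v ≠ 0)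
    {m : ℕ} {f : MvPolynomial (Fin 3) K} (hf : f ∈ pointIdeal (Fin.cons 0 v) ^ m) (j : ℕ) :
    pointForm v ^ (m - j) ∣ (finSuccEquiv K 2 f).coeff j := by
  rw [← Ideal.mem_span_singleton, ← Ideal.span_singleton_pow]
  refine coeff_mem_pow_of_mem_comap_constantCoeff_pow
    (map_mem_pow_of_mem_pointIdeal_pow (finSuccEquiv K 2) (fun g hg hgv ↦ ?_) hf) j
  refine Ideal.mem_span_singleton.2 <| pointForm_dvd_of_eval_eq_zero hv
    (hg.finSuccEquiv_coeff_isHomogeneous 0 1 rfl) ?_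
  exact (eval_coeff_zero_finSuccEquiv v g).trans hgv

theorem coeff_finSuccEquiv_mem_idealOfVars_pow {K : Type*} [Field K] {N : ℕ}
    {f : MvPolynomial (Fin 3) K} (hf : f ∈ pointIdeal (Fin.cons 1 0) ^ N) (j : ℕ) :
    (finSuccEquiv K 2 f).coeff j ∈ idealOfVars (Fin 2) K ^ N := by
  have hmem := map_mem_pow_of_mem_pointIdeal_pow (finSuccEquiv K 2)
    (J := (idealOfVars (Fin 2) K).map Polynomial.C) (fun g hg hgv ↦ ?_) hf
  · rw [← Ideal.map_pow, Ideal.mem_map_C_iff] at hmem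
    exact hmem j
  · obtain ⟨c, rfl⟩ := exists_eq_sum_smul_X_of_isHomogeneous_one hg
    rw [Fin.sum_univ_succ] at hgv ⊢
    have hc : c 0 = 0 := by
      simpa only [map_add, map_sum, smul_eval, eval_X, Fin.cons_zero, Fin.cons_succ, Pi.zero_apply,
        mul_one, mul_zero, Finset.sum_const_zero, add_zero] using hgv
    rw [hc, zero_smul, zero_add, map_sum]
    refine Submodule.sum_mem _ fun i _ ↦ ?_
    rw [map_smul, finSuccEquiv_X_succ]
    exact Submodule.smul_of_tower_mem _ _ <|
      Ideal.mem_map_of_mem _ (Ideal.subset_span (Set.mem_range_self i))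

theorem exists_add_le_totalDegree_of_mem_pointIdeal_pow {K ι : Type*} [Field K] {s : Finset ι}
    {v : ι → Fin 2 → K} (hv : ∀ i ∈ s, v i ≠ 0)
    (hvv : ∀ i ∈ s, ∀ j ∈ s, i ≠ j → ∀ c : K, c • v i ≠ v j) {a : ℕ} {m : ι → ℕ}
    {f : MvPolynomial (Fin 3) K} (hf0 : f ≠ 0) (hapex : f ∈ pointIdeal (Fin.cons 1 0) ^ a)
    (hline : ∀ i ∈ s, f ∈ pointIdeal (Fin.cons 0 (v i)) ^ m i) :
    ∃ j, a + j ≤ f.totalDegree ∧ ∑ i ∈ s, (m i - j) + j ≤ f.totalDegree := by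
  have hF0 : finSuccEquiv K 2 f ≠ 0 := (map_ne_zero_iff _ (finSuccEquiv K 2).injective).2 hf0
  obtain ⟨j, hj⟩ : ∃ j, (finSuccEquiv K 2 f).coeff j ≠ 0 := by
    by_contra! h
    exact hF0 (Polynomial.ext h)
  have hdeg := totalDegree_coeff_finSuccEquiv_add_le f j hj
  have ha := le_totalDegree_of_mem_pow_idealOfVars
    (coeff_finSuccEquiv_mem_idealOfVars_pow hapex j) hj
  have hm := sum_le_totalDegree_of_pointForm_pow_dvd hv hvv hj
    fun i hi ↦ pointForm_pow_dvd_coeff_finSuccEquiv (hv i hi) (hline i hi) j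
  exact ⟨j, by omega, by omega⟩

end Expansion

section LinearSubstitution

variable {R σ τ υ : Type*} [CommRing R] [Fintype σ] [DecidableEq σ] [Fintype τ]

/-- The pullback `f ↦ f ∘ T` of polynomials along a linear map `T`, used as a linear change of
coordinates. -/
def linearSubst (T : (σ → R) →ₗ[R] τ → R) : MvPolynomial τ R →ₐ[R] MvPolynomial σ R :=
  bind₁ (T.toMvPolynomial (Pi.basisFun R σ) (Pi.basisFun R τ))

theorem eval_linearSubst (T : (σ → R) →ₗ[R] τ → R) (x : σ → R) (f : MvPolynomial τ R) :
    eval x (linearSubst T f) = eval (T x) f := by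
  have hT : (fun i ↦ eval x (T.toMvPolynomial (Pi.basisFun R σ) (Pi.basisFun R τ) i)) = T x := by
    ext i
    rw [LinearMap.toMvPolynomial, Matrix.toMvPolynomial_eval_eq_apply]
    exact congrFun (LinearMap.toMatrix_mulVec_repr (Pi.basisFun R σ) (Pi.basisFun R τ) T x) i
  rw [linearSubst, ← coe_aeval_eq_eval, RingHom.coe_coe, aeval_bind₁]
  exact congrArg (fun y ↦ aeval y f) hT

theorem linearSubst_isHomogeneous (T : (σ → R) →ₗ[R] τ → R) {f : MvPolynomial τ R} {d : ℕ}
    (hf : f.IsHomogeneous d) : (linearSubst T f).IsHomogeneous d :=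
  one_mul d ▸ hf.aeval _ fun i ↦ T.toMvPolynomial_isHomogeneous _ _ i

theorem linearSubst_linearSubst [DecidableEq τ] [Fintype υ] (S : (τ → R) →ₗ[R] υ → R)
    (T : (σ → R) →ₗ[R] τ → R) (f : MvPolynomial υ R) :
    linearSubst T (linearSubst S f) = linearSubst (S ∘ₗ T) f := by
  rw [linearSubst, linearSubst, bind₁_bind₁, linearSubst]
  congr 2 with i : 1
  rw [LinearMap.toMvPolynomial_comp _ (Pi.basisFun R τ)]

theorem linearSubst_injective (T : (σ → R) ≃ₗ[R] τ → R) :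
    Function.Injective (linearSubst T.toLinearMap) := by
  classical
  refine Function.LeftInverse.injective (g := linearSubst T.symm.toLinearMap) fun f ↦ ?_
  rw [linearSubst_linearSubst, LinearEquiv.comp_coe, LinearEquiv.symm_trans_self,
    LinearEquiv.refl_toLinearMap, linearSubst, LinearMap.toMvPolynomial_id, bind₁_X_left]
  rfl

theorem linearSubst_mem_pointIdeal_pow {K : Type*} [Field K]
    (T : (Fin 3 → K) →ₗ[K] Fin 3 → K) {q : Fin 3 → K} {N : ℕ} {f : MvPolynomial (Fin 3) K}
    (hf : f ∈ pointIdeal (T q) ^ N) :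
    linearSubst T f ∈ pointIdeal q ^ N :=
  map_mem_pow_of_mem_pointIdeal_pow (linearSubst T) (J := pointIdeal q) (fun g hg hgq ↦
    Ideal.subset_span ⟨linearSubst_isHomogeneous T hg, (eval_linearSubst T q g).trans hgq⟩) hf

end LinearSubstitution

section Coordinates

variable {K : Type*} [Field K]

theorem exists_linearEquiv_cons_one_zero_eq {V : Type*} [AddCommGroup V] [Module K V] {n : ℕ}
    (hV : Module.finrank K V = n + 1) {φ : Module.Dual K V} {x : V} (hx : φ x ≠ 0) :
    ∃ T : (Fin (n + 1) → K) ≃ₗ[K] V,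
      T (Fin.cons 1 0) = x ∧ ∀ y, φ y = 0 → ∃ v : Fin n → K, T (Fin.cons 0 v) = y := by
  have : FiniteDimensional K V := .of_finrank_pos (by omega)
  have hφ : φ ≠ 0 := by rintro rfl; exact hx rfl
  have hker : Module.finrank K (LinearMap.ker φ) = n := by
    have := Module.Dual.finrank_ker_add_one_of_ne_zero hφ
    omega
  obtain ⟨b⟩ : Nonempty (Module.Basis (Fin n) K (LinearMap.ker φ)) :=
    ⟨Module.finBasisOfFinrankEq K (LinearMap.ker φ) hker⟩
  have hli : LinearIndependent K (Fin.cons x fun i ↦ (b i : V) : Fin (n + 1) → V) := by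
    have hspan : Submodule.span K (Set.range fun i ↦ (b i : V)) ≤ LinearMap.ker φ :=
      Submodule.span_le.2 (Set.range_subset_iff.2 fun i ↦ (b i).2)
    have hb : LinearIndependent K fun i ↦ (b i : V) :=
      b.linearIndependent.map' _ (LinearMap.ker φ).ker_subtype
    exact linearIndependent_finCons.2 ⟨hb, fun hmem ↦ hx (hspan hmem)⟩
  let B := basisOfLinearIndependentOfCardEqFinrank hli (by simp [hV])
  have hB (y : Fin (n + 1) → K) : B.equivFun.symm y = y 0 • x + ∑ i, y i.succ • (b i : V) := by
    simp [B, Module.Basis.equivFun_symm_apply, Fin.sum_univ_succ]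
  refine ⟨B.equivFun.symm, by simp [hB], fun y hy ↦ ⟨b.equivFun ⟨y, hy⟩, ?_⟩⟩
  have hy_sum := congrArg Subtype.val (b.sum_equivFun ⟨y, hy⟩)
  simp only [Submodule.coe_sum, Submodule.coe_smul] at hy_sum
  simpa only [hB, Fin.cons_zero, Fin.cons_succ, zero_smul, zero_add] using hy_sum

theorem projEq_of_smul_eq {p q : Fin 3 → K} (hq : q ≠ 0) {c : K} (h : c • p = q) : projEq p q :=
  ⟨c, by rintro rfl; exact hq (by rw [← h, zero_smul]), h.symm⟩

theorem card_mul_add_sum_le {ι : Type*} {s : Finset ι} {m : ι → ℕ} {a d j : ℕ} (ha : a + j ≤ d)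
    (hm : ∑ i ∈ s, (m i - j) + j ≤ d) : s.card * a + ∑ i ∈ s, m i ≤ s.card * d + a := by
  have hsum : ∑ i ∈ s, m i ≤ ∑ i ∈ s, (m i - j) + s.card * j := by
    rw [← smul_eq_mul, ← Finset.sum_const, ← Finset.sum_add_distrib]
    exact Finset.sum_le_sum fun i _ ↦ by omega
  obtain rfl | hs := s.eq_empty_or_nonempty
  · simp
  obtain ⟨t, ht⟩ := Nat.exists_eq_add_one.2 hs.card_pos
  rw [ht] at hsum ⊢
  linarith [Nat.mul_le_mul_left t ha]

variable {ι : Type*}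

theorem card_mul_add_sum_le_card_mul_degree {ℓ : MvPolynomial (Fin 3) K}
    (hℓ : ℓ.IsHomogeneous 1) {q : Fin 3 → K} (hq : eval q ℓ ≠ 0) {s : Finset ι}
    {p : ι → Fin 3 → K} (hp0 : ∀ i ∈ s, p i ≠ 0)
    (hdist : ∀ i ∈ s, ∀ j ∈ s, i ≠ j → ¬ projEq (p i) (p j)) (hp : ∀ i ∈ s, eval (p i) ℓ = 0)
    {a d : ℕ} {m : ι → ℕ} {f : MvPolynomial (Fin 3) K} (hf0 : f ≠ 0) (hfd : f.IsHomogeneous d)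
    (hfq : f ∈ pointIdeal q ^ a) (hfp : ∀ i ∈ s, f ∈ pointIdeal (p i) ^ m i) :
    s.card * a + ∑ i ∈ s, m i ≤ s.card * d + a := by
  obtain ⟨φ, hφ⟩ := exists_dual_eq_eval_of_isHomogeneous_one hℓ
  obtain ⟨T, rfl, hT⟩ := exists_linearEquiv_cons_one_zero_eq (φ := φ) (x := q)
    (Module.finrank_fin_fun K) (by rwa [hφ])
  choose! v hv using fun i (hi : i ∈ s) ↦ hT (p i) ((hφ _).trans (hp i hi))
  have hv0 : ∀ i ∈ s, v i ≠ 0 := fun i hi h ↦ hp0 i hi <| by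
    rw [← hv i hi, h, show (Fin.cons 0 0 : Fin 3 → K) = 0 from Fin.cons_self_tail 0, map_zero]
  have hvv : ∀ i ∈ s, ∀ j ∈ s, i ≠ j → ∀ c : K, c • v i ≠ v j := by
    refine fun i hi j hj hij c hc ↦ hdist i hi j hj hij (projEq_of_smul_eq (c := c) (hp0 j hj) ?_)
    rw [← hv i hi, ← hv j hj, ← hc, ← map_smul]
    congr 1
    ext k
    cases k using Fin.cases <;> simp
  have hgd := (linearSubst_isHomogeneous T.toLinearMap hfd).totalDegree_le
  obtain ⟨j, ha, hm⟩ := exists_add_le_totalDegree_of_mem_pointIdeal_pow hv0 hvv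
    ((map_ne_zero_iff _ (linearSubst_injective T)).2 hf0)
    (linearSubst_mem_pointIdeal_pow T.toLinearMap hfq)
    (fun i hi ↦ linearSubst_mem_pointIdeal_pow T.toLinearMap ((hv i hi).symm ▸ hfp i hi))
  exact card_mul_add_sum_le (ha.trans hgd) (hm.trans hgd)

end Coordinates

section Waldschmidt

variable {K ι : Type*} [Field K]

theorem exists_isHomogeneous_one_mem_pointIdeal (q : Fin 3 → K) :
    ∃ f ∈ pointIdeal q, f ≠ 0 ∧ f.IsHomogeneous 1 := by
  by_cases hq : q 0 = 0
  · exact ⟨X 0, Ideal.subset_span ⟨isHomogeneous_X K 0, by simpa using hq⟩, X_ne_zero 0,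
      isHomogeneous_X K 0⟩
  · have hhom : (C (q 1) * X 0 - C (q 0) * X 1 : MvPolynomial (Fin 3) K).IsHomogeneous 1 :=
      (isHomogeneous_C_mul_X _ _).sub (isHomogeneous_C_mul_X _ _)
    refine ⟨_, Ideal.subset_span ⟨hhom, by simp [mul_comm]⟩, fun h ↦ hq ?_, hhom⟩
    simpa using congrArg (eval ![0, 1, 0]) h

theorem exists_isHomogeneous_mem_iInf_pointIdeal_pow [Finite ι] (p : ι → Fin 3 → K) (m : ι → ℕ) :
    ∃ d, ∃ f ∈ ⨅ i, pointIdeal (p i) ^ m i, f ≠ 0 ∧ f.IsHomogeneous d := by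
  have := Fintype.ofFinite ι
  choose g hg hg0 hghom using fun i ↦ exists_isHomogeneous_one_mem_pointIdeal (p i)
  refine ⟨_, ∏ i, g i ^ m i, Ideal.mem_iInf.2 fun i ↦ ?_,
    Finset.prod_ne_zero_iff.2 fun i _ ↦ pow_ne_zero _ (hg0 i),
    IsHomogeneous.prod _ _ _ fun i _ ↦ (hghom i).pow (m i)⟩
  exact Ideal.mem_of_dvd _ (Finset.dvd_prod_of_mem _ (Finset.mem_univ i))
    (Ideal.pow_mem_pow (hg i) _)

theorem card_mul_add_sum_le_card_mul_alpha [Fintype ι] [DecidableEq ι]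
    {ℓ : MvPolynomial (Fin 3) K} (hℓ : ℓ.IsHomogeneous 1) {p : ι → Fin 3 → K} {i₀ : ι}
    (hoff : eval (p i₀) ℓ ≠ 0) (hon : ∀ i ≠ i₀, eval (p i) ℓ = 0) (hp0 : ∀ i ≠ i₀, p i ≠ 0)
    (hdist : ∀ i ≠ i₀, ∀ j ≠ i₀, i ≠ j → ¬ projEq (p i) (p j)) (m : ι → ℕ) :
    (Finset.univ.erase i₀).card * m i₀ + ∑ i ∈ Finset.univ.erase i₀, m i ≤
      (Finset.univ.erase i₀).card * alpha (⨅ i, pointIdeal (p i) ^ m i) + m i₀ := by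
  obtain ⟨f, hf, hf0, hfd⟩ := Nat.sInf_mem (exists_isHomogeneous_mem_iInf_pointIdeal_pow p m)
  rw [Ideal.mem_iInf] at hf
  exact card_mul_add_sum_le_card_mul_degree hℓ hoff (by simpa using hp0) (by simpa using hdist)
    (by simpa using hon) hf0 hfd (hf i₀) fun i _ ↦ hf i

theorem sum_erase_ite_eq_card_sub_one_mul [Fintype ι] [DecidableEq ι] (i₀ : ι) (a b : ℕ) :
    ∑ i ∈ Finset.univ.erase i₀, ((if i = i₀ then a else b : ℕ) : ℝ) =
      (Fintype.card ι - 1 : ℝ) * b := by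
  have : Nonempty ι := ⟨i₀⟩
  rw [Finset.sum_congr rfl fun i hi ↦ congrArg Nat.cast (if_neg (Finset.ne_of_mem_erase hi)),
    Finset.sum_const, Finset.card_erase_of_mem (Finset.mem_univ _), Finset.card_univ, nsmul_eq_mul,
    Nat.cast_pred Fintype.card_pos]

theorem waldschmidt_ge_double_point_off_line_general [Fintype ι] [DecidableEq ι] [Nontrivial ι]
    {ℓ : MvPolynomial (Fin 3) K} (hℓ : ℓ.IsHomogeneous 1) {p : ι → Fin 3 → K} {i₀ : ι}
    (hoff : eval (p i₀) ℓ ≠ 0) (hon : ∀ i ≠ i₀, eval (p i) ℓ = 0) (hp0 : ∀ i ≠ i₀, p i ≠ 0)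
    (hdist : ∀ i ≠ i₀, ∀ j ≠ i₀, i ≠ j → ¬ projEq (p i) (p j)) (m : ι → ℕ) :
    m i₀ + (∑ i ∈ Finset.univ.erase i₀, (m i : ℝ) - m i₀) / (Fintype.card ι - 1 : ℝ) ≤
      ⨅ k : ℕ+, (alpha (⨅ i, pointIdeal (p i) ^ ((k : ℕ) * m i)) : ℝ) / ((k : ℕ) : ℝ) := by
  refine le_ciInf fun k ↦ ?_
  have hk : (0 : ℝ) < (k : ℕ) := by exact_mod_cast k.pos
  have hcard : (1 : ℝ) < Fintype.card ι := by exact_mod_cast Fintype.one_lt_card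
  have hα := card_mul_add_sum_le_card_mul_alpha hℓ hoff hon hp0 hdist fun i ↦ (k : ℕ) * m i
  rw [← Finset.mul_sum, Finset.card_erase_of_mem (Finset.mem_univ _), Finset.card_univ,
    ← Nat.cast_le (α := ℝ)] at hα
  push_cast [Nat.cast_pred Fintype.card_pos] at hα
  rw [le_div_iff₀ hk, add_div' _ _ _ (sub_pos.2 hcard).ne', div_mul_eq_mul_div,
    div_le_iff₀ (sub_pos.2 hcard)]
  linarith

end Waldschmidt

/-- Let `n ≥ 4`, let `L = {ℓ = 0}` be a line of `ℙ²`, let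
`p 1, …, p (n-1)` be distinct points of `L`, and let `p 0` be a point not on `L`.  Let
`Z = 2·p 0 + p 1 + ⋯ + p (n-1)`.  Then `α̂(I(Z)) ≥ (3n − 5)/(n − 1) = 3 − 2/(n − 1)`. -/
theorem waldschmidt_ge_double_point_off_line
    {kk : Type*} [Field kk] [IsAlgClosed kk]
    (n : ℕ) (hn : 4 ≤ n)
    (ℓ : MvPolynomial (Fin 3) kk) (hl0 : ℓ ≠ 0) (hl1 : ℓ.IsHomogeneous 1)
    (p : Fin n → (Fin 3 → kk)) (hp0 : ∀ i, p i ≠ 0)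
    (hdist : ∀ i j, i ≠ j → ¬ projEq (p i) (p j))
    (hoff : MvPolynomial.eval (p ⟨0, by omega⟩) ℓ ≠ 0)
    (hon : ∀ i : Fin n, i ≠ ⟨0, by omega⟩ → MvPolynomial.eval (p i) ℓ = 0) :
    (⨅ k : ℕ+, (alpha (⨅ i : Fin n,
        pointIdeal (p i) ^ ((k : ℕ) * (if i = (⟨0, by omega⟩ : Fin n) then 2 else 1))) : ℝ)
          / ((k : ℕ) : ℝ))
      ≥ (3 * (n : ℝ) - 5) / ((n : ℝ) - 1) ∧
    (3 * (n : ℝ) - 5) / ((n : ℝ) - 1) = 3 - 2 / ((n : ℝ) - 1) := by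
  have : Nontrivial (Fin n) := Fin.nontrivial_iff_two_le.2 (by omega)
  have hn1 : (n : ℝ) - 1 ≠ 0 := sub_ne_zero.2 (by exact_mod_cast (by omega : n ≠ 1))
  refine ⟨le_of_eq_of_le ?_ (waldschmidt_ge_double_point_off_line_general hl1 hoff hon
    (fun i _ ↦ hp0 i) (fun i _ j _ ↦ hdist i j) fun i ↦ if i = ⟨0, by omega⟩ then 2 else 1),
    by field_simp; ring⟩
  rw [sum_erase_ite_eq_card_sub_one_mul, if_pos rfl, Fintype.card_fin]
  push_cast
  field_simp
  ring
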